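/- (Exact gauge cancellation identity for the approximate mass metric.) Let M ∈ ℝ and Ω := {x ∈ ℝ³ : |x| > 0 and |x| > 2M}. On Ω, with r = |x|, define the time-independent symmetric 2-tensor h̃ by h̃_{00} := 2M/r, h̃_{0i} := 0, h̃_{ij} := −(4M log(r−2M)/r) δ_{ij} − (x_i x_j/r²)(2M/r − 4M log(r−2M)/r), and the vector G̃ by G̃^0 := 0, G̃^i := −(4M log(r−2M)/r²)(x^i/r). Then for every i ∈ {1,2,3} and every x ∈ Ω: m^{αβ}∂_α h̃_{βi} − ½ m^{αβ}∂_i h̃_{αβ} + m_{iν}G̃^ν = 8M² x^i/(r³(r−2M)), i.e. Σ_j ∂_j h̃_{ji} − ½ ∂_i(−h̃_{00} + Σ_j h̃_{jj}) + G̃^i = 8M² x^i/(r³(r−2M)); and the corresponding μ = 0 component m^{αβ}∂_α h̃_{β0} − ½ m^{αβ}∂_t h̃_{αβ} + m_{0ν}G̃^ν vanishes identically. -/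

import Mathlib

open MeasureTheory

noncomputable def pd (μ : Fin 4) (f : (Fin 4 → ℝ) → ℝ) (x : Fin 4 → ℝ) : ℝ :=
  fderiv ℝ f x (Pi.single μ 1)

noncomputable def pd3 (i : Fin 3) (f : (Fin 3 → ℝ) → ℝ) (x : Fin 3 → ℝ) : ℝ :=
  fderiv ℝ f x (Pi.single i 1)

noncomputable def rad (p : Fin 4 → ℝ) : ℝ := Real.sqrt (∑ i : Fin 3, (p i.succ) ^ 2)

noncomputable def rad3 (y : Fin 3 → ℝ) : ℝ := Real.sqrt (∑ i : Fin 3, (y i) ^ 2)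

noncomputable def spt (t : ℝ) (y : Fin 3 → ℝ) : Fin 4 → ℝ := ![t, y 0, y 1, y 2]

noncomputable def minkVF : Fin 11 → (Fin 4 → ℝ) → Fin 4 → ℝ :=
  ![fun _ => Pi.single 0 1,
    fun _ => Pi.single 1 1,
    fun _ => Pi.single 2 1,
    fun _ => Pi.single 3 1,
    fun p => p 1 • (Pi.single 2 1 : Fin 4 → ℝ) - p 2 • (Pi.single 1 1 : Fin 4 → ℝ),
    fun p => p 1 • (Pi.single 3 1 : Fin 4 → ℝ) - p 3 • (Pi.single 1 1 : Fin 4 → ℝ),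
    fun p => p 2 • (Pi.single 3 1 : Fin 4 → ℝ) - p 3 • (Pi.single 2 1 : Fin 4 → ℝ),
    fun p => p 0 • (Pi.single 1 1 : Fin 4 → ℝ) + p 1 • (Pi.single 0 1 : Fin 4 → ℝ),
    fun p => p 0 • (Pi.single 2 1 : Fin 4 → ℝ) + p 2 • (Pi.single 0 1 : Fin 4 → ℝ),
    fun p => p 0 • (Pi.single 3 1 : Fin 4 → ℝ) + p 3 • (Pi.single 0 1 : Fin 4 → ℝ),
    fun p => p]

noncomputable def GammaList : List (Fin 11) → ((Fin 4 → ℝ) → ℝ) → (Fin 4 → ℝ) → ℝ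
  | [] => fun f p => f p
  | k :: I => fun f p => fderiv ℝ (GammaList I f) p (minkVF k p)

noncomputable def derivNormSq (f : (Fin 4 → ℝ) → ℝ) (p : Fin 4 → ℝ) : ℝ :=
  ∑ μ : Fin 4, (pd μ f p) ^ 2

noncomputable def derivNorm (f : (Fin 4 → ℝ) → ℝ) (p : Fin 4 → ℝ) : ℝ :=
  Real.sqrt (derivNormSq f p)

noncomputable def dS (f : (Fin 4 → ℝ) → ℝ) (p : Fin 4 → ℝ) : ℝ :=
  (1 / 2) * (pd 0 f p + ∑ i : Fin 3, (p i.succ / rad p) * pd i.succ f p)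

noncomputable def dQ (f : (Fin 4 → ℝ) → ℝ) (p : Fin 4 → ℝ) : ℝ :=
  (1 / 2) * ((∑ i : Fin 3, (p i.succ / rad p) * pd i.succ f p) - pd 0 f p)

noncomputable def angSq (f : (Fin 4 → ℝ) → ℝ) (p : Fin 4 → ℝ) : ℝ :=
  (1 / 2) * (∑ i : Fin 3, ∑ j : Fin 3,
    ((p i.succ / rad p) * pd j.succ f p - (p j.succ / rad p) * pd i.succ f p) ^ 2)

noncomputable def goodNormSq (f : (Fin 4 → ℝ) → ℝ) (p : Fin 4 → ℝ) : ℝ :=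
  (dS f p) ^ 2 + angSq f p

noncomputable def goodNorm (f : (Fin 4 → ℝ) → ℝ) (p : Fin 4 → ℝ) : ℝ :=
  Real.sqrt (goodNormSq f p)

noncomputable def gradSq (f : (Fin 4 → ℝ) → ℝ) (p : Fin 4 → ℝ) : ℝ :=
  (pd 0 f p) ^ 2 + ∑ i : Fin 3, (pd i.succ f p) ^ 2

noncomputable def Lup (p : Fin 4 → ℝ) : Fin 4 → ℝ :=
  ![1, p 1 / rad p, p 2 / rad p, p 3 / rad p]

noncomputable def Llow (p : Fin 4 → ℝ) : Fin 4 → ℝ :=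
  ![-1, p 1 / rad p, p 2 / rad p, p 3 / rad p]

noncomputable def Lbup (p : Fin 4 → ℝ) : Fin 4 → ℝ :=
  ![1, -(p 1 / rad p), -(p 2 / rad p), -(p 3 / rad p)]

noncomputable def Evec : Fin 3 → (Fin 4 → ℝ) → Fin 4 → ℝ :=
  ![fun p => (p 2 / rad p) • (Pi.single 3 1 : Fin 4 → ℝ) - (p 3 / rad p) • (Pi.single 2 1 : Fin 4 → ℝ),
    fun p => (p 1 / rad p) • (Pi.single 3 1 : Fin 4 → ℝ) - (p 3 / rad p) • (Pi.single 1 1 : Fin 4 → ℝ),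
    fun p => (p 1 / rad p) • (Pi.single 2 1 : Fin 4 → ℝ) - (p 2 / rad p) • (Pi.single 1 1 : Fin 4 → ℝ)]

noncomputable def frameVF : Fin 5 → (Fin 4 → ℝ) → Fin 4 → ℝ :=
  ![Lup, Lbup, Evec 0, Evec 1, Evec 2]

noncomputable def mInv : Fin 4 → Fin 4 → ℝ :=
  fun α β => if α = β then (if α = 0 then -1 else 1) else 0

noncomputable def wgt (γ q : ℝ) : ℝ :=
  if 0 ≤ q then 1 + (1 + |q|) ^ (1 + 2 * γ) else 1 + (1 + |q|) ^ (-(γ / 2))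

noncomputable def wgt' (γ q : ℝ) : ℝ :=
  if 0 ≤ q then (1 + 2 * γ) * (1 + |q|) ^ (2 * γ) else (γ / 2) * (1 + |q|) ^ (-(γ / 2) - 1)

noncomputable def matNorm (H : (Fin 4 → ℝ) → Fin 4 → Fin 4 → ℝ) (p : Fin 4 → ℝ) : ℝ :=
  Real.sqrt (∑ α : Fin 4, ∑ β : Fin 4, (H p α β) ^ 2)

noncomputable def matLL (H : (Fin 4 → ℝ) → Fin 4 → Fin 4 → ℝ) (p : Fin 4 → ℝ) : ℝ :=
  |∑ α : Fin 4, ∑ β : Fin 4, H p α β * Llow p α * Llow p β|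

noncomputable def dmatNorm (H : (Fin 4 → ℝ) → Fin 4 → Fin 4 → ℝ) (p : Fin 4 → ℝ) : ℝ :=
  Real.sqrt (∑ c : Fin 4, ∑ α : Fin 4, ∑ β : Fin 4, (pd c (fun y => H y α β) p) ^ 2)

noncomputable def dmatLL (H : (Fin 4 → ℝ) → Fin 4 → Fin 4 → ℝ) (p : Fin 4 → ℝ) : ℝ :=
  Real.sqrt (∑ u : Fin 5,
    (∑ α : Fin 4, ∑ β : Fin 4,
      fderiv ℝ (fun y => H y α β) p (frameVF u p) * Llow p α * Llow p β) ^ 2)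

noncomputable def gdmatNorm (H : (Fin 4 → ℝ) → Fin 4 → Fin 4 → ℝ) (p : Fin 4 → ℝ) : ℝ :=
  Real.sqrt (∑ α : Fin 4, ∑ β : Fin 4, goodNormSq (fun y => H y α β) p)

/-- The spatial part `h̃_{ij}` of the approximate mass metric. -/
noncomputable def htil (M : ℝ) (i j : Fin 3) (y : Fin 3 → ℝ) : ℝ :=
  -(4 * M * Real.log (rad3 y - 2 * M) / rad3 y) * (if i = j then 1 else 0)
    - (y i * y j / (rad3 y) ^ 2)
        * (2 * M / rad3 y - 4 * M * Real.log (rad3 y - 2 * M) / rad3 y)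

/-- The gauge source vector `G̃^i`. -/
noncomputable def Gtil (M : ℝ) (i : Fin 3) (y : Fin 3 → ℝ) : ℝ :=
  -(4 * M * Real.log (rad3 y - 2 * M) / (rad3 y) ^ 2) * (y i / rad3 y)

/-- The full (time-independent) symmetric 2-tensor `h̃_{μν}`:
`h̃_{00} = 2M/r`, `h̃_{0i} = 0`, and spatial part `htil`. -/
noncomputable def htil4 (M : ℝ) (y : Fin 3 → ℝ) : Fin 4 → Fin 4 → ℝ :=
  Fin.cons (Fin.cons (2 * M / rad3 y) (fun _ : Fin 3 => 0))
    (fun i : Fin 3 => Fin.cons 0 (fun j : Fin 3 => htil M i j y))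

/-- The gauge source vector `G̃^μ`, with `G̃^0 = 0`. -/
noncomputable def Gtil4 (M : ℝ) (y : Fin 3 → ℝ) : Fin 4 → ℝ :=
  Fin.cons 0 (fun i : Fin 3 => Gtil M i y)

/-!
With `ω = x / r` and `a(r) = -4M log(r - 2M) / r`, the spatial tensor is
`h̃_ij = a δ_ij + c ω_i ω_j` where `c = -(h̃_00 + a)`. In dimension `n` the gauge expression of such
a tensor is `-(n - 1)/2 · (a' + 2 (h̃_00 + a) / r) ω_i`: the derivative of `h̃_00` drops out. For
`n = 3` and `h̃_00 = 2M / r`, adding `G̃ = (a / r) ω` completes `a' + a / r` to `(r a)' / r`, and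
since `(r a)' = -4M / (r - 2M)` carries no logarithm, what remains is
`(4M / (r (r - 2M)) - 4M / r²) ω = 8M² / (r² (r - 2M)) ω`.
-/

section RadialCalculus

variable {ι : Type*} [Fintype ι]

/-- The Euclidean distance to the origin on `ι → ℝ`. It is defined by hand because the library norm
on a function space is the supremum norm. For `ι = Fin 3` it is definitionally `rad3`. -/
noncomputable def radius (y : ι → ℝ) : ℝ := √(∑ i, y i ^ 2)

/-- The differential of `radius` away from the origin: the covector with components `x k / r`. -/
noncomputable def radialCovector (x : ι → ℝ) : (ι → ℝ) →L[ℝ] ℝ :=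
  ∑ k, (x k / radius x) • ContinuousLinearMap.proj k

lemma sum_sq_eq_radius_sq (x : ι → ℝ) : ∑ i, x i ^ 2 = radius x ^ 2 :=
  (Real.sq_sqrt (by positivity)).symm

lemma sum_div_radius_sq {x : ι → ℝ} (hx : radius x ≠ 0) : ∑ i, (x i / radius x) ^ 2 = 1 := by
  simp only [div_pow, ← Finset.sum_div, sum_sq_eq_radius_sq]
  exact div_self (pow_ne_zero 2 hx)

lemma hasFDerivAt_radius {x : ι → ℝ} (hx : radius x ≠ 0) :
    HasFDerivAt radius (radialCovector x) x := by
  have sum_ne_zero : ∑ i, x i ^ 2 ≠ 0 := sum_sq_eq_radius_sq x ▸ pow_ne_zero 2 hx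
  have hasFDerivAt_sqrt :=
    (HasFDerivAt.fun_sum (u := Finset.univ) fun i _ ↦
      (hasFDerivAt_apply (𝕜 := ℝ) i x).pow 2).sqrt sum_ne_zero
  refine hasFDerivAt_sqrt.congr_fderiv ?_
  rw [radialCovector, Finset.smul_sum]
  refine Finset.sum_congr rfl fun i _ ↦ ?_
  rw [smul_smul, ← radius]
  congr 1
  simp only [nsmul_eq_mul]
  field_simp
  ring

lemma hasFDerivAt_comp_radius {x : ι → ℝ} (hx : radius x ≠ 0) {φ : ℝ → ℝ} {φ' : ℝ}
    (hφ : HasDerivAt φ φ' (radius x)) :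
    HasFDerivAt (fun y ↦ φ (radius y)) (φ' • radialCovector x) x :=
  hφ.comp_hasFDerivAt x (hasFDerivAt_radius hx)

lemma hasFDerivAt_coord_div_radius {x : ι → ℝ} (hx : radius x ≠ 0) (i : ι) :
    HasFDerivAt (fun y ↦ y i / radius y)
      ((radius x)⁻¹ • (ContinuousLinearMap.proj i - (x i / radius x) • radialCovector x)) x := by
  have hasFDerivAt_mul_inv :=
    (hasFDerivAt_apply (𝕜 := ℝ) i x).fun_mul (hasFDerivAt_comp_radius hx (hasDerivAt_inv hx))
  simp only [← div_eq_mul_inv] at hasFDerivAt_mul_inv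
  refine hasFDerivAt_mul_inv.congr_fderiv ?_
  module

variable [DecidableEq ι]

/-- The coordinate derivative `∂_i f`. For `ι = Fin 3` it is definitionally `pd3`. -/
noncomputable def partialDeriv (i : ι) (f : (ι → ℝ) → ℝ) (x : ι → ℝ) : ℝ :=
  fderiv ℝ f x (Pi.single i 1)

lemma radialCovector_single (x : ι → ℝ) (k : ι) :
    radialCovector x (Pi.single k 1) = x k / radius x := by
  simp [radialCovector, Pi.single_apply]

lemma partialDeriv_comp_radius {x : ι → ℝ} (hx : radius x ≠ 0) {φ : ℝ → ℝ} {φ' : ℝ}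
    (hφ : HasDerivAt φ φ' (radius x)) (k : ι) :
    partialDeriv k (fun y ↦ φ (radius y)) x = φ' * (x k / radius x) := by
  simp [partialDeriv, (hasFDerivAt_comp_radius hx hφ).fderiv, radialCovector_single]

/-- The rotationally covariant symmetric 2-tensor field `a(r) δ_ij + c(r) ω_i ω_j`, where
`ω = y / r`. -/
noncomputable def radialTensor (a c : ℝ → ℝ) (i j : ι) (y : ι → ℝ) : ℝ :=
  a (radius y) * (if i = j then 1 else 0) + c (radius y) * (y i / radius y * (y j / radius y))

lemma sum_radialTensor_diag (a c : ℝ → ℝ) {y : ι → ℝ} (hy : radius y ≠ 0) :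
    ∑ j, radialTensor a c j j y = Fintype.card ι * a (radius y) + c (radius y) := by
  simp [radialTensor, Finset.sum_add_distrib, ← Finset.mul_sum, ← pow_two, sum_div_radius_sq hy]

lemma partialDeriv_radialTensor {x : ι → ℝ} (hx : radius x ≠ 0) {a c : ℝ → ℝ} {a' c' : ℝ}
    (ha : HasDerivAt a a' (radius x)) (hc : HasDerivAt c c' (radius x)) (i j k : ι) :
    partialDeriv k (radialTensor a c i j) x =
      a' * (x k / radius x) * (if i = j then 1 else 0)
        + c' * (x k / radius x) * (x i / radius x * (x j / radius x))
        + c (radius x) / radius x *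
          (((if i = k then 1 else 0) - x i / radius x * (x k / radius x)) * (x j / radius x)
            + x i / radius x * ((if j = k then 1 else 0) - x j / radius x * (x k / radius x))) := by
  have hasFDerivAt_tensor :=
    ((hasFDerivAt_comp_radius hx ha).mul_const (if i = j then 1 else 0)).fun_add
      ((hasFDerivAt_comp_radius hx hc).fun_mul
        ((hasFDerivAt_coord_div_radius hx i).fun_mul (hasFDerivAt_coord_div_radius hx j)))
  unfold partialDeriv radialTensor
  rw [hasFDerivAt_tensor.fderiv]
  simp only [add_apply, smul_apply, sub_apply, ContinuousLinearMap.proj_apply,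
    radialCovector_single, Pi.single_apply, smul_eq_mul]
  ring

lemma sum_partialDeriv_radialTensor {x : ι → ℝ} (hx : radius x ≠ 0) {a c : ℝ → ℝ} {a' c' : ℝ}
    (ha : HasDerivAt a a' (radius x)) (hc : HasDerivAt c c' (radius x)) (i : ι) :
    ∑ j, partialDeriv j (radialTensor a c j i) x =
      (a' + c' + (Fintype.card ι - 1) * c (radius x) / radius x) * (x i / radius x) := by
  have summand (j : ι) : partialDeriv j (radialTensor a c j i) x =
      (a' * (x j / radius x) + c (radius x) / radius x * (x j / radius x)) *
          (if j = i then 1 else 0)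
        + c (radius x) / radius x * (x i / radius x)
        + (c' - 2 * (c (radius x) / radius x)) * (x i / radius x) * (x j / radius x) ^ 2 := by
    rw [partialDeriv_radialTensor hx ha hc]
    simp only [if_true, eq_comm (a := i)]
    ring
  simp only [summand, Finset.sum_add_distrib, ← Finset.mul_sum, sum_div_radius_sq hx,
    mul_ite, mul_one, mul_zero, Finset.sum_ite_eq', Finset.mem_univ, if_true, Finset.sum_const,
    Finset.card_univ, nsmul_eq_mul]
  ring

/-- The spatial component `m^{αβ}∂_α h_{βi} - ½ m^{αβ}∂_i h_{αβ}` of the wave-coordinate condition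
for a time-independent tensor with `h_{00} = h₀` and spatial part `h`, the dimension of space being
arbitrary. -/
noncomputable def staticGauge (h₀ : (ι → ℝ) → ℝ) (h : ι → ι → (ι → ℝ) → ℝ) (i : ι)
    (x : ι → ℝ) : ℝ :=
  ∑ j, partialDeriv j (h j i) x - 1 / 2 * partialDeriv i (fun y ↦ -h₀ y + ∑ j, h j j y) x

lemma staticGauge_radialTensor {x : ι → ℝ} (hx : radius x ≠ 0) {b a c : ℝ → ℝ} {b' a' c' : ℝ}
    (hb : HasDerivAt b b' (radius x)) (ha : HasDerivAt a a' (radius x))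
    (hc : HasDerivAt c c' (radius x)) (i : ι) :
    staticGauge (fun y ↦ b (radius y)) (radialTensor a c) i x =
      (a' + c' + (Fintype.card ι - 1) * c (radius x) / radius x
        - (-b' + (Fintype.card ι * a' + c')) / 2) * (x i / radius x) := by
  have trace_eventuallyEq :
      (fun y ↦ -b (radius y) + ∑ j, radialTensor a c j j y) =ᶠ[nhds x]
        fun y ↦ -b (radius y) + (Fintype.card ι * a (radius y) + c (radius y)) := by
    filter_upwards [(hasFDerivAt_radius hx).continuousAt.eventually_ne hx] with y hy
    rw [sum_radialTensor_diag a c hy]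
  have partialDeriv_trace :
      partialDeriv i (fun y ↦ -b (radius y) + ∑ j, radialTensor a c j j y) x =
        (-b' + (Fintype.card ι * a' + c')) * (x i / radius x) := by
    rw [partialDeriv, trace_eventuallyEq.fderiv_eq]
    exact partialDeriv_comp_radius hx
      (hb.fun_neg.fun_add ((ha.const_mul (Fintype.card ι : ℝ)).fun_add hc)) i
  rw [staticGauge, sum_partialDeriv_radialTensor hx ha hc, partialDeriv_trace]
  ring

lemma staticGauge_radialTensor_neg_add {x : ι → ℝ} (hx : radius x ≠ 0) {b a : ℝ → ℝ} {b' a' : ℝ}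
    (hb : HasDerivAt b b' (radius x)) (ha : HasDerivAt a a' (radius x)) (i : ι) :
    staticGauge (fun y ↦ b (radius y)) (radialTensor a fun r ↦ -(b r + a r)) i x =
      -((Fintype.card ι - 1) / 2 * (a' + 2 * (b (radius x) + a (radius x)) / radius x)) *
        (x i / radius x) := by
  rw [staticGauge_radialTensor hx hb ha (hb.fun_add ha).fun_neg]
  ring

end RadialCalculus

/-- The angular coefficient `-4M log(r - 2M) / r` of the approximate mass metric. -/
noncomputable def massProfile (M r : ℝ) : ℝ := -(4 * M * Real.log (r - 2 * M) / r)

lemma hasDerivAt_massProfile {M r : ℝ} (hr : r ≠ 0) (hrM : r - 2 * M ≠ 0) :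
    HasDerivAt (massProfile M) (-(4 * M / (r - 2 * M) + massProfile M r) / r) r := by
  have hasDerivAt_four_mul_log : HasDerivAt (fun s ↦ 4 * M * Real.log (s - 2 * M))
      (4 * M * (1 / (r - 2 * M))) r :=
    (((hasDerivAt_id r).sub_const _).log hrM).const_mul _
  refine (hasDerivAt_four_mul_log.fun_div (hasDerivAt_id r) hr).fun_neg.congr_deriv ?_
  simp only [massProfile, id]
  generalize Real.log (r - 2 * M) = L
  field_simp
  ring

lemma htil_eq_radialTensor (M : ℝ) :
    htil M = radialTensor (massProfile M) fun r ↦ -(2 * M / r + massProfile M r) := by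
  funext i j y
  simp only [htil, radialTensor, massProfile, show radius y = rad3 y from rfl]
  ring

lemma Gtil_eq_massProfile (M : ℝ) (i : Fin 3) (y : Fin 3 → ℝ) :
    Gtil M i y = massProfile M (rad3 y) / rad3 y * (y i / rad3 y) := by
  simp only [Gtil, massProfile]
  ring

lemma staticGauge_htil {M : ℝ} {x : Fin 3 → ℝ} (hx : rad3 x ≠ 0) (hxM : rad3 x - 2 * M ≠ 0)
    (i : Fin 3) :
    staticGauge (fun y ↦ 2 * M / rad3 y) (htil M) i x =
      (4 * M / (rad3 x * (rad3 x - 2 * M)) - 4 * M / rad3 x ^ 2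
        - massProfile M (rad3 x) / rad3 x) * (x i / rad3 x) := by
  have hasDerivAt_newton : HasDerivAt (fun r ↦ 2 * M / r) (-(2 * M / rad3 x ^ 2)) (rad3 x) := by
    simpa [div_eq_mul_inv] using (hasDerivAt_inv hx).const_mul (2 * M)
  rw [htil_eq_radialTensor]
  refine (staticGauge_radialTensor_neg_add hx hasDerivAt_newton
    (hasDerivAt_massProfile hx hxM) i).trans ?_
  simp only [show radius x = rad3 x from rfl, Fintype.card_fin]
  field_simp
  ring

/-- Exact gauge cancellation identity for the approximate mass metric:
on `{|x| > 0} ∩ {|x| > 2M}` (using that `h̃, G̃` are time independent),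
`m^{αβ}∂_α h̃_{βi} − ½ m^{αβ}∂_i h̃_{αβ} + m_{iν}G̃^ν = 8M² x^i/(r³(r−2M))`, i.e.
`Σ_j ∂_j h̃_{ji} − ½ ∂_i(−h̃_{00} + Σ_j h̃_{jj}) + G̃^i = 8M² x^i/(r³(r−2M))`,
while the `μ = 0` component `Σ_j ∂_j h̃_{j0} − G̃^0` vanishes identically. -/
theorem stmt16 (M : ℝ) (x : Fin 3 → ℝ) (h0 : 0 < rad3 x) (hM : 2 * M < rad3 x) :
    (∀ i : Fin 3,
      (∑ j : Fin 3, pd3 j (fun y => htil4 M y j.succ i.succ) x)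
          - (1 / 2) * pd3 i
              (fun y => -(htil4 M y 0 0) + (∑ j : Fin 3, htil4 M y j.succ j.succ)) x
          + Gtil4 M x i.succ
        = 8 * M ^ 2 * x i / ((rad3 x) ^ 3 * (rad3 x - 2 * M)))
    ∧ ((∑ j : Fin 3, pd3 j (fun y => htil4 M y j.succ 0) x) - Gtil4 M x 0 = 0) := by
  have hr : rad3 x ≠ 0 := h0.ne'
  have hrM : rad3 x - 2 * M ≠ 0 := (sub_pos.2 hM).ne'
  refine ⟨fun i ↦ ?_, by simp [htil4, Gtil4, pd3]⟩
  calc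
    _ = staticGauge (fun y ↦ 2 * M / rad3 y) (htil M) i x + Gtil M i x := rfl
    _ = (4 * M / (rad3 x * (rad3 x - 2 * M)) - 4 * M / rad3 x ^ 2) * (x i / rad3 x) := by
      rw [staticGauge_htil hr hrM, Gtil_eq_massProfile]
      ring
    _ = 8 * M ^ 2 * x i / (rad3 x ^ 3 * (rad3 x - 2 * M)) := by
      rw [div_sub_div _ _ (mul_ne_zero hr hrM) (pow_ne_zero 2 hr), div_mul_div_comm,
        div_eq_div_iff (by positivity) (by positivity)]
      ring
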